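/- arXiv:1708.01481 — 6 statements merged into one kernel-verified Lean document; each statement's English description precedes it below -/
import Mathlib

section
/- Let B be a k×p real matrix and A a k×r real matrix such that every column of A lies in the column space of B. Let f : (0,∞)^p → ℝ^r be dimensionally covariant with respect to A and B. Let m = p − rank(B), let π_1, …, π_m be a basis of the null space {π ∈ ℝ^p : Bπ = 0}, and for each l = 1, …, r let y_l ∈ ℝ^p be a vector with B y_l = −a_l, where a_l is the l-th column of A. Then there exists a function h : (0,∞)^m → ℝ^r such that for every x ∈ (0,∞)^p and every l = 1, …, r, f(x)_l · ∏_{i=1}^p x_i^{(y_l)_i} = h_l( ∏_{i=1}^p x_i^{(π_1)_i}, …, ∏_{i=1}^p x_i^{(π_m)_i} ). (Multivariate Buckingham Π-Theorem, conclusions (i) and (iii): the functional relationship Y = f(x) can be rewritten entirely in terms of the p − rank(B) dimensionless predictors and r dimensionless responses.) -/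
/-!
Changes of units act on `(0,∞)^p` by multiplication. In logarithmic coordinates the orbit of a
point is its translate by the row space of `B`, which is the orthogonal complement of `ker B`;
hence two points lie in the same orbit as soon as the monomials with exponents in a spanning set of
`ker B` agree on them. Since `B y_l = -a_l`, the response `f(x)_l ∏ᵢ xᵢ^{(y_l)ᵢ}` is constant on
orbits, so it factors through these monomials.
-/

open scoped Matrix

theorem exists_vecMul_eq_iff {K κ ι : Type*} [Field K] [Fintype κ] [Fintype ι]
    (B : Matrix κ ι K) (v : ι → K) :
    (∃ w, w ᵥ* B = v) ↔ ∀ u, B *ᵥ u = 0 → v ⬝ᵥ u = 0 := by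
  classical
  constructor
  · rintro ⟨w, rfl⟩ u hu
    rw [← Matrix.dotProduct_mulVec, hu, dotProduct_zero]
  · intro hv
    have hmem : dotProductEquiv K ι v ∈ LinearMap.range B.mulVecLin.dualMap := by
      rw [LinearMap.range_dualMap_eq_dualAnnihilator_ker, Submodule.mem_dualAnnihilator]
      exact hv
    obtain ⟨ψ, hψ⟩ := hmem
    obtain ⟨w, rfl⟩ := (dotProductEquiv K κ).surjective ψ
    refine ⟨w, dotProduct_eq _ _ fun u => ?_⟩
    rw [← Matrix.dotProduct_mulVec]
    exact LinearMap.congr_fun hψ u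

section PowerProduct

variable {ι : Type*} [Fintype ι] {x x' : ι → ℝ}

/-- The monomial `∏ᵢ xᵢ ^ yᵢ` with real exponents. It is meant for positive `x`, and takes the
conventional values of `Real.rpow` elsewhere. -/
noncomputable def powerProduct (x y : ι → ℝ) : ℝ :=
  ∏ i, x i ^ y i

theorem powerProduct_pos (hx : ∀ i, 0 < x i) (y : ι → ℝ) : 0 < powerProduct x y :=
  Finset.prod_pos fun i _ => Real.rpow_pos_of_pos (hx i) (y i)

@[simp]
theorem powerProduct_zero (x : ι → ℝ) : powerProduct x 0 = 1 := by
  simp [powerProduct]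

theorem powerProduct_add (hx : ∀ i, 0 < x i) (y z : ι → ℝ) :
    powerProduct x (y + z) = powerProduct x y * powerProduct x z := by
  simp only [powerProduct, Pi.add_apply, Real.rpow_add (hx _), Finset.prod_mul_distrib]

theorem powerProduct_smul (hx : ∀ i, 0 ≤ x i) (a : ℝ) (y : ι → ℝ) :
    powerProduct x (a • y) = powerProduct x y ^ a := by
  simp only [powerProduct, Pi.smul_apply, smul_eq_mul, mul_comm a, Real.rpow_mul (hx _)]
  exact Real.finsetProd_rpow _ _ (fun i _ => Real.rpow_nonneg (hx i) (y i)) a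

theorem powerProduct_neg (hx : ∀ i, 0 ≤ x i) (y : ι → ℝ) :
    powerProduct x (-y) = (powerProduct x y)⁻¹ := by
  simp only [powerProduct, Pi.neg_apply, Real.rpow_neg (hx _), Finset.prod_inv_distrib]

theorem mul_powerProduct (hx : ∀ i, 0 ≤ x i) (hx' : ∀ i, 0 ≤ x' i) (y : ι → ℝ) :
    powerProduct (x * x') y = powerProduct x y * powerProduct x' y := by
  simp only [powerProduct, Pi.mul_apply, Real.mul_rpow (hx _) (hx' _), Finset.prod_mul_distrib]

theorem div_powerProduct (hx : ∀ i, 0 ≤ x i) (hx' : ∀ i, 0 ≤ x' i) (y : ι → ℝ) :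
    powerProduct (x / x') y = powerProduct x y / powerProduct x' y := by
  simp only [powerProduct, Pi.div_apply, Real.div_rpow (hx _) (hx' _), Finset.prod_div_distrib]

theorem log_powerProduct (hx : ∀ i, 0 < x i) (y : ι → ℝ) :
    Real.log (powerProduct x y) = (fun i => Real.log (x i)) ⬝ᵥ y := by
  rw [powerProduct, Real.log_prod fun i _ => (Real.rpow_pos_of_pos (hx i) (y i)).ne']
  simp only [Real.log_rpow (hx _), dotProduct, mul_comm]

theorem powerProduct_exp (w y : ι → ℝ) :
    powerProduct (fun i => Real.exp (w i)) y = Real.exp (w ⬝ᵥ y) := by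
  simp only [powerProduct, ← Real.exp_mul, dotProduct, Real.exp_sum]

theorem eqOn_powerProduct_span (hx : ∀ i, 0 < x i) (hx' : ∀ i, 0 < x' i) {s : Set (ι → ℝ)}
    (h : Set.EqOn (powerProduct x) (powerProduct x') s) :
    Set.EqOn (powerProduct x) (powerProduct x') (Submodule.span ℝ s) := by
  intro y hy
  induction hy using Submodule.span_induction with
  | mem y hy => exact h hy
  | zero => rw [powerProduct_zero, powerProduct_zero]
  | add y z _ _ ihy ihz => rw [powerProduct_add hx, powerProduct_add hx', ihy, ihz]
  | smul a y _ ih =>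
    rw [powerProduct_smul fun i => (hx i).le, powerProduct_smul fun i => (hx' i).le, ih]

end PowerProduct

section UnitScaling

variable {κ ι : Type*} [Fintype κ] {c : κ → ℝ}

/-- The factors by which quantities with dimension matrix `B` are multiplied under a change of
units that multiplies a quantity of the `j`-th fundamental dimension by `c j`. The induced scaling
of `x` is `unitScaling B c * x`. -/
noncomputable def unitScaling (B : Matrix κ ι ℝ) (c : κ → ℝ) : ι → ℝ :=
  fun i => powerProduct c (B.col i)

theorem unitScaling_pos (hc : ∀ j, 0 < c j) (B : Matrix κ ι ℝ) (i : ι) : 0 < unitScaling B c i :=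
  powerProduct_pos hc (B.col i)

theorem unitScaling_exp (B : Matrix κ ι ℝ) (w : κ → ℝ) :
    unitScaling B (fun j => Real.exp (w j)) = fun i => Real.exp ((w ᵥ* B) i) :=
  funext fun i => powerProduct_exp w (B.col i)

variable [Fintype ι]

theorem powerProduct_unitScaling (hc : ∀ j, 0 < c j) (B : Matrix κ ι ℝ) (y : ι → ℝ) :
    powerProduct (unitScaling B c) y = powerProduct c (B *ᵥ y) :=
  calc ∏ i, (∏ j, c j ^ B j i) ^ y i
    _ = ∏ i, ∏ j, c j ^ (B j i * y i) := by
      refine Finset.prod_congr rfl fun i _ => ?_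
      rw [← Real.finsetProd_rpow _ _ fun j _ => Real.rpow_nonneg (hc j).le (B j i)]
      simp only [Real.rpow_mul (hc _).le]
    _ = ∏ j, ∏ i, c j ^ (B j i * y i) := Finset.prod_comm
    _ = ∏ j, c j ^ (∑ i, B j i * y i) := by simp only [Real.rpow_sum_of_pos (hc _)]

theorem exists_unitScaling_eq_iff (B : Matrix κ ι ℝ) {z : ι → ℝ} (hz : ∀ i, 0 < z i) :
    (∃ c : κ → ℝ, (∀ j, 0 < c j) ∧ unitScaling B c = z) ↔
      ∀ u, B *ᵥ u = 0 → powerProduct z u = 1 := by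
  constructor
  · rintro ⟨c, hc, rfl⟩ u hu
    rw [powerProduct_unitScaling hc, hu, powerProduct_zero]
  · intro h
    have log_orthogonal : ∀ u, B *ᵥ u = 0 → (fun i => Real.log (z i)) ⬝ᵥ u = 0 := fun u hu => by
      rw [← log_powerProduct hz, h u hu, Real.log_one]
    obtain ⟨w, hw⟩ := (exists_vecMul_eq_iff B _).mpr log_orthogonal
    refine ⟨fun j => Real.exp (w j), fun j => Real.exp_pos (w j), ?_⟩
    simp only [unitScaling_exp, hw, Real.exp_log (hz _)]

theorem exists_unitScaling_mul_eq {B : Matrix κ ι ℝ} {s : Set (ι → ℝ)}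
    (hs : LinearMap.ker B.mulVecLin ≤ Submodule.span ℝ s) {x x' : ι → ℝ}
    (hx : ∀ i, 0 < x i) (hx' : ∀ i, 0 < x' i)
    (h : Set.EqOn (powerProduct x) (powerProduct x') s) :
    ∃ c : κ → ℝ, (∀ j, 0 < c j) ∧ unitScaling B c * x = x' := by
  have ratio_dimensionless : ∀ u, B *ᵥ u = 0 → powerProduct (x' / x) u = 1 := fun u hu => by
    rw [div_powerProduct (fun i => (hx' i).le) (fun i => (hx i).le),
      ← eqOn_powerProduct_span hx hx' h (hs hu), div_self (powerProduct_pos hx u).ne']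
  obtain ⟨c, hc, hcz⟩ :=
    (exists_unitScaling_eq_iff B fun i => div_pos (hx' i) (hx i)).mpr ratio_dimensionless
  refine ⟨c, hc, funext fun i => ?_⟩
  rw [hcz, Pi.mul_apply, div_mul_cancel₀ _ (hx i).ne']

end UnitScaling

section Covariance

variable {κ ι ρ τ : Type*} [Fintype κ] {A : Matrix κ ρ ℝ} {B : Matrix κ ι ℝ}
  {f : (ι → ℝ) → ρ → ℝ}

/-- Dimensional covariance of `f`, as a map on the positive orthant, with respect to the dimension
matrices `A` of the responses and `B` of the predictors. The values of `f` at points with a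
nonpositive coordinate are unconstrained. -/
def IsDimensionallyCovariant (A : Matrix κ ρ ℝ) (B : Matrix κ ι ℝ) (f : (ι → ℝ) → ρ → ℝ) : Prop :=
  ∀ c : κ → ℝ, (∀ j, 0 < c j) → ∀ x : ι → ℝ, (∀ i, 0 < x i) →
    f (unitScaling B c * x) = unitScaling A c * f x

variable [Fintype ι]

theorem IsDimensionallyCovariant.mul_powerProduct_unitScaling_mul
    (hf : IsDimensionallyCovariant A B f) {l : ρ} {y : ι → ℝ} (hy : B *ᵥ y = -A.col l)
    {c : κ → ℝ} (hc : ∀ j, 0 < c j) {x : ι → ℝ} (hx : ∀ i, 0 < x i) :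
    f (unitScaling B c * x) l * powerProduct (unitScaling B c * x) y = f x l * powerProduct x y :=
  have scaling_ne_zero : powerProduct c (A.col l) ≠ 0 := (powerProduct_pos hc _).ne'
  calc f (unitScaling B c * x) l * powerProduct (unitScaling B c * x) y
    _ = (powerProduct c (A.col l) * f x l) *
        ((powerProduct c (A.col l))⁻¹ * powerProduct x y) := by
      rw [hf c hc x hx, mul_powerProduct (fun i => (unitScaling_pos hc B i).le) fun i => (hx i).le,
        powerProduct_unitScaling hc, hy, powerProduct_neg fun j => (hc j).le]
      rfl
    _ = f x l * powerProduct x y := by field_simp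

theorem multivariate_buckingham_pi_general (hf : IsDimensionallyCovariant A B f)
    {π : τ → ι → ℝ} (hπ : LinearMap.ker B.mulVecLin ≤ Submodule.span ℝ (Set.range π))
    {y : ρ → ι → ℝ} (hy : ∀ l, B *ᵥ y l = -A.col l) :
    ∃ h : (τ → ℝ) → ρ → ℝ, ∀ x : ι → ℝ, (∀ i, 0 < x i) → ∀ l,
      f x l * powerProduct x (y l) = h (fun t => powerProduct x (π t)) l := by
  let response (x : {x : ι → ℝ // ∀ i, 0 < x i}) (l : ρ) : ℝ := f x l * powerProduct x (y l)
  let predictor (x : {x : ι → ℝ // ∀ i, 0 < x i}) (t : τ) : ℝ := powerProduct x (π t)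
  have response_factors : response.FactorsThrough predictor := by
    rintro ⟨x, hx⟩ ⟨x', hx'⟩ hxx'
    obtain ⟨c, hc, rfl⟩ :=
      exists_unitScaling_mul_eq hπ hx hx' (Set.forall_mem_range.mpr (congrFun hxx'))
    exact funext fun l => (hf.mul_powerProduct_unitScaling_mul (hy l) hc hx).symm
  obtain ⟨h, hh⟩ := (Function.factorsThrough_iff response).mp response_factors
  exact ⟨h, fun x hx => congrFun (congrFun hh ⟨x, hx⟩)⟩

end Covariance

/-- **Multivariate Buckingham Π-Theorem (conclusions (i) and (iii)).**
If every column of the response dimension matrix `A` lies in the column space of the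
predictor dimension matrix `B`, and `f : (0,∞)^p → ℝ^r` is dimensionally covariant with
respect to `A` and `B`, then with `π_1, …, π_m` a basis of the null space of `B`
(`m = p - rank B`) and `y_l` solving `B y_l = -a_l`, there is a function `h` expressing
every dimensionless response `f(x)_l ∏ᵢ xᵢ^{(y_l)ᵢ}` in terms of the dimensionless
predictor monomials `∏ᵢ xᵢ^{(π_t)ᵢ}`. -/
theorem multivariate_buckingham_pi
    (k p r m : ℕ)
    (B : Matrix (Fin k) (Fin p) ℝ) (A : Matrix (Fin k) (Fin r) ℝ)
    (hA : ∀ l : Fin r, (fun j => A j l) ∈ LinearMap.range B.mulVecLin)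
    (f : (Fin p → ℝ) → (Fin r → ℝ))
    (hf : ∀ c : Fin k → ℝ, (∀ j, 0 < c j) → ∀ x : Fin p → ℝ, (∀ i, 0 < x i) →
      ∀ l : Fin r,
        f (fun i => (∏ j, c j ^ B j i) * x i) l = (∏ j, c j ^ A j l) * f x l)
    (hm : m = p - B.rank)
    (π : Fin m → (Fin p → ℝ))
    (hπ_indep : LinearIndependent ℝ π)
    (hπ_span : Submodule.span ℝ (Set.range π) = LinearMap.ker B.mulVecLin)
    (y : Fin r → (Fin p → ℝ))
    (hy : ∀ l : Fin r, B.mulVec (y l) = fun j => -(A j l)) :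
    ∃ h : (Fin m → ℝ) → (Fin r → ℝ),
      ∀ x : Fin p → ℝ, (∀ i, 0 < x i) → ∀ l : Fin r,
        f x l * ∏ i, x i ^ y l i = h (fun t => ∏ i, x i ^ π t i) l :=
  multivariate_buckingham_pi_general (fun c hc x hx => funext (hf c hc x hx)) hπ_span.ge hy
end

section
/- Let B be a k×p real matrix, A a k×r real matrix, and g : ℝ^p → ℝ^r a function satisfying g(u + Bᵀ t) = g(u) + Aᵀ t for every u ∈ ℝ^p and t ∈ ℝ^k. Let m = p − rank(B), let π_1, …, π_m be a basis of the null space {π ∈ ℝ^p : Bπ = 0}, and for each l = 1, …, r let y_l ∈ ℝ^p satisfy B y_l = −a_l, where a_l is the l-th column of A. Then there exists a function h : ℝ^m → ℝ^r such that for every u ∈ ℝ^p and every l, g(u)_l + ⟨y_l, u⟩ = h_l(⟨π_1, u⟩, …, ⟨π_m, u⟩). (This is the Multivariate Buckingham Π-Theorem in logarithmic coordinates.) -/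
open Matrix

/-!
By covariance and `B y_l = -a_l`, the map `u ↦ g(u)_l + ⟨y_l, u⟩` is invariant under translations by
the range of `Bᵀ`. That range is the annihilator of `ker B` for the dot product, so two points with
the same products `⟨π_i, ·⟩` differ by an element of it, and the invariant map factors through these
products.
-/

section

variable {K k n ι r : Type*} [Fintype k] [Fintype n]

lemma dualMap_mulVecLin_comp_dotProductEquiv [CommSemiring K] [DecidableEq k] [DecidableEq n]
    (B : Matrix k n K) :
    B.mulVecLin.dualMap ∘ₗ (dotProductEquiv K k).toLinearMap =
      (dotProductEquiv K n).toLinearMap ∘ₗ Bᵀ.mulVecLin := by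
  refine LinearMap.ext fun t => LinearMap.ext fun v => ?_
  change t ⬝ᵥ B *ᵥ v = (Bᵀ *ᵥ t) ⬝ᵥ v
  rw [dotProduct_comm (Bᵀ *ᵥ t), dotProduct_transpose_mulVec]

lemma mem_range_mulVecLin_transpose_iff [Field K] (B : Matrix k n K) (w : n → K) :
    w ∈ LinearMap.range Bᵀ.mulVecLin ↔ ∀ v ∈ LinearMap.ker B.mulVecLin, v ⬝ᵥ w = 0 := by
  classical
  have map_range_eq_dualAnnihilator :
      (LinearMap.range Bᵀ.mulVecLin).map (dotProductEquiv K n).toLinearMap =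
        (LinearMap.ker B.mulVecLin).dualAnnihilator := by
    rw [← LinearMap.range_comp, ← dualMap_mulVecLin_comp_dotProductEquiv,
      LinearEquiv.range_comp, LinearMap.range_dualMap_eq_dualAnnihilator_ker]
  calc w ∈ LinearMap.range Bᵀ.mulVecLin
    _ ↔ dotProductEquiv K n w ∈ (LinearMap.ker B.mulVecLin).dualAnnihilator := by
        rw [← map_range_eq_dualAnnihilator]
        exact ((dotProductEquiv K n).injective.mem_set_image).symm
    _ ↔ ∀ v ∈ LinearMap.ker B.mulVecLin, v ⬝ᵥ w = 0 := by
        simp only [Submodule.mem_dualAnnihilator, dotProductEquiv_apply_apply, dotProduct_comm w]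

lemma forall_mem_span_range_dotProduct_eq_zero_iff [CommSemiring K] (π : ι → n → K) (w : n → K) :
    (∀ v ∈ Submodule.span K (Set.range π), v ⬝ᵥ w = 0) ↔ ∀ i, π i ⬝ᵥ w = 0 := by
  change Submodule.span K (Set.range π) ≤ LinearMap.ker ((dotProductBilin K K).flip w) ↔ _
  rw [Submodule.span_le, Set.range_subset_iff]
  rfl

lemma factorsThrough_dotProduct_of_transpose_mulVec_invariant [Field K] {α : Type*}
    {B : Matrix k n K} {f : (n → K) → α} (hf : ∀ u t, f (u + Bᵀ *ᵥ t) = f u)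
    {π : ι → n → K} (hπ : LinearMap.ker B.mulVecLin ≤ Submodule.span K (Set.range π)) :
    f.FactorsThrough fun u i => π i ⬝ᵥ u := by
  intro u v huv
  have sub_orthogonal : ∀ i, π i ⬝ᵥ (u - v) = 0 := fun i => by
    rw [dotProduct_sub, sub_eq_zero]
    exact congrFun huv i
  obtain ⟨t, ht⟩ : u - v ∈ LinearMap.range Bᵀ.mulVecLin :=
    (mem_range_mulVecLin_transpose_iff B _).2 fun x hx =>
      (forall_mem_span_range_dotProduct_eq_zero_iff π _).2 sub_orthogonal x (hπ hx)
  rw [← hf v t, ← mulVecLin_apply, ht, add_sub_cancel]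

lemma add_dotProduct_transpose_mulVec_invariant [CommRing K] {B : Matrix k n K} {a : k → K}
    {φ : (n → K) → K} (hφ : ∀ u t, φ (u + Bᵀ *ᵥ t) = φ u + a ⬝ᵥ t)
    {y : n → K} (hy : B *ᵥ y = -a) (u : n → K) (t : k → K) :
    φ (u + Bᵀ *ᵥ t) + y ⬝ᵥ (u + Bᵀ *ᵥ t) = φ u + y ⬝ᵥ u := by
  have dotProduct_shift : y ⬝ᵥ Bᵀ *ᵥ t = -(a ⬝ᵥ t) := by
    rw [dotProduct_transpose_mulVec, hy, dotProduct_neg, dotProduct_comm]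
  rw [hφ, dotProduct_add, dotProduct_shift]
  ring

theorem multivariate_buckingham_pi_log_general [Field K]
    (B : Matrix k n K) (A : Matrix k r K) (g : (n → K) → r → K)
    (hg : ∀ u t, g (u + Bᵀ *ᵥ t) = g u + Aᵀ *ᵥ t)
    (π : ι → n → K) (hπ : LinearMap.ker B.mulVecLin ≤ Submodule.span K (Set.range π))
    (y : r → n → K) (hy : ∀ l, B *ᵥ y l = -A.col l) :
    ∃ h : (ι → K) → r → K, ∀ u l, g u l + y l ⬝ᵥ u = h (fun i => π i ⬝ᵥ u) l := by
  have invariant (u : n → K) (t : k → K) :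
      (fun l => g (u + Bᵀ *ᵥ t) l + y l ⬝ᵥ (u + Bᵀ *ᵥ t)) = fun l => g u l + y l ⬝ᵥ u :=
    funext fun l => add_dotProduct_transpose_mulVec_invariant (φ := fun u => g u l)
      (fun u t => congrFun (hg u t) l) (hy l) u t
  obtain ⟨h, hh⟩ := (Function.factorsThrough_iff _).1
    (factorsThrough_dotProduct_of_transpose_mulVec_invariant
      (f := fun u l => g u l + y l ⬝ᵥ u) invariant hπ)
  exact ⟨h, fun u l => congrFun (congrFun hh u) l⟩

end

/-- **Multivariate Buckingham Π-Theorem in logarithmic coordinates.**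
If `g : ℝ^p → ℝ^r` satisfies the translation covariance `g(u + Bᵀ t) = g(u) + Aᵀ t`,
then with `π_1, …, π_m` a basis of the null space of `B` (`m = p - rank B`) and
`y_l` solving `B y_l = -a_l`, there exists `h : ℝ^m → ℝ^r` with
`g(u)_l + ⟨y_l, u⟩ = h_l(⟨π_1, u⟩, …, ⟨π_m, u⟩)`. -/
theorem multivariate_buckingham_pi_log
    (k p r m : ℕ)
    (B : Matrix (Fin k) (Fin p) ℝ) (A : Matrix (Fin k) (Fin r) ℝ)
    (g : (Fin p → ℝ) → (Fin r → ℝ))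
    (hg : ∀ u : Fin p → ℝ, ∀ t : Fin k → ℝ,
      g (u + B.transpose.mulVec t) = g u + A.transpose.mulVec t)
    (hm : m = p - B.rank)
    (π : Fin m → (Fin p → ℝ))
    (hπ_indep : LinearIndependent ℝ π)
    (hπ_span : Submodule.span ℝ (Set.range π) = LinearMap.ker B.mulVecLin)
    (y : Fin r → (Fin p → ℝ))
    (hy : ∀ l : Fin r, B.mulVec (y l) = fun j => -(A j l)) :
    ∃ h : (Fin m → ℝ) → (Fin r → ℝ),
      ∀ u : Fin p → ℝ, ∀ l : Fin r,
        g u l + y l ⬝ᵥ u = h (fun t => π t ⬝ᵥ u) l :=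
  multivariate_buckingham_pi_log_general B A g hg π hπ_span.ge y hy
end

section
/- Let B be a k×p real matrix and π ∈ ℝ^p an exponent vector. The monomial x ↦ ∏_{i=1}^p x_i^{π_i} is invariant under every scaling induced by B, i.e., ∏_{i=1}^p ((∏_{j=1}^k c_j^{B_{ji}}) x_i)^{π_i} = ∏_{i=1}^p x_i^{π_i} for all c ∈ (0,∞)^k and all x ∈ (0,∞)^p, if and only if Bπ = 0. -/
/-!
In logarithmic coordinates a monomial is the exponential of a linear functional: at `x = exp t` it
equals `exp (t ⬝ᵥ π)`. The scaling induced by `c = exp t` is the translation by `t ᵥ* B`, so it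
multiplies the monomial by `exp ((t ᵥ* B) ⬝ᵥ π) = exp (t ⬝ᵥ B *ᵥ π)`. This factor is `1` for every
`t` exactly when `B *ᵥ π` is orthogonal to all vectors.
-/

open scoped Matrix

theorem forall_pos_iff_forall_exp {α : Type*} {P : (α → ℝ) → Prop} :
    (∀ c : α → ℝ, (∀ j, 0 < c j) → P c) ↔ ∀ t : α → ℝ, P fun j => Real.exp (t j) := by
  refine ⟨fun h t => h _ fun j => Real.exp_pos (t j), fun h c hc => ?_⟩
  simpa only [Real.exp_log (hc _)] using h fun j => Real.log (c j)

section Monomial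

variable {ι : Type*} [Fintype ι]

/-- The monomial `x ↦ ∏ᵢ xᵢ ^ aᵢ` with real exponents. It is defined by `Real.rpow` on all of
`ι → ℝ`, but meant for points with positive coordinates. -/
noncomputable def rpowMonomial (a x : ι → ℝ) : ℝ :=
  ∏ i, x i ^ a i

theorem rpowMonomial_pos (a : ι → ℝ) {x : ι → ℝ} (hx : ∀ i, 0 < x i) : 0 < rpowMonomial a x :=
  Finset.prod_pos fun i _ => Real.rpow_pos_of_pos (hx i) (a i)

theorem rpowMonomial_mul (a : ι → ℝ) {x y : ι → ℝ} (hx : ∀ i, 0 ≤ x i) (hy : ∀ i, 0 ≤ y i) :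
    rpowMonomial a (fun i => x i * y i) = rpowMonomial a x * rpowMonomial a y := by
  simp only [rpowMonomial, Real.mul_rpow (hx _) (hy _), Finset.prod_mul_distrib]

theorem rpowMonomial_exp (a t : ι → ℝ) :
    rpowMonomial a (fun i => Real.exp (t i)) = Real.exp (t ⬝ᵥ a) := by
  simp only [rpowMonomial, ← Real.exp_mul, ← Real.exp_sum, dotProduct]

end Monomial

section Scaling

variable {κ ι : Type*} [Fintype κ]

/-- The scaling of the predictors `x` induced by the dimension matrix `B` when the `j`-th
fundamental dimension is rescaled by `c j`. -/
noncomputable def dimensionalScaling (B : Matrix κ ι ℝ) (c : κ → ℝ) (x : ι → ℝ) : ι → ℝ :=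
  fun i => rpowMonomial (B.col i) c * x i

theorem dimensionalScaling_exp (B : Matrix κ ι ℝ) (t : κ → ℝ) (x : ι → ℝ) :
    dimensionalScaling B (fun j => Real.exp (t j)) x =
      fun i => Real.exp ((t ᵥ* B) i) * x i :=
  funext fun i => congrArg (· * x i) (rpowMonomial_exp (B.col i) t)

variable [Fintype ι]

theorem rpowMonomial_dimensionalScaling_exp (B : Matrix κ ι ℝ) (π : ι → ℝ) (t : κ → ℝ)
    {x : ι → ℝ} (hx : ∀ i, 0 ≤ x i) :
    rpowMonomial π (dimensionalScaling B (fun j => Real.exp (t j)) x) =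
      Real.exp (t ⬝ᵥ B *ᵥ π) * rpowMonomial π x := by
  rw [dimensionalScaling_exp, rpowMonomial_mul π (fun i => (Real.exp_pos _).le) hx,
    rpowMonomial_exp, Matrix.dotProduct_mulVec]

theorem rpowMonomial_dimensionalScaling_exp_eq_self_iff (B : Matrix κ ι ℝ) (π : ι → ℝ)
    (t : κ → ℝ) {x : ι → ℝ} (hx : ∀ i, 0 < x i) :
    rpowMonomial π (dimensionalScaling B (fun j => Real.exp (t j)) x) = rpowMonomial π x ↔
      t ⬝ᵥ B *ᵥ π = 0 := by
  rw [rpowMonomial_dimensionalScaling_exp B π t fun i => (hx i).le,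
    mul_eq_right₀ (rpowMonomial_pos π hx).ne', Real.exp_eq_one_iff]

theorem monomial_dimensionless_iff_general (B : Matrix κ ι ℝ) (π : ι → ℝ)
    {x : ι → ℝ} (hx : ∀ i, 0 < x i) :
    (∀ c : κ → ℝ, (∀ j, 0 < c j) →
      rpowMonomial π (dimensionalScaling B c x) = rpowMonomial π x) ↔ B *ᵥ π = 0 := by
  simp only [forall_pos_iff_forall_exp, rpowMonomial_dimensionalScaling_exp_eq_self_iff B π _ hx,
    dotProduct_comm _ (B *ᵥ π), dotProduct_eq_zero_iff]

end Scaling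

/-- **Dimensionless monomials are exactly the null space of `B`.**
The monomial `x ↦ ∏ᵢ xᵢ^{πᵢ}` is invariant under every scaling induced by the dimension
matrix `B` if and only if `Bπ = 0`. -/
theorem monomial_dimensionless_iff
    (k p : ℕ) (B : Matrix (Fin k) (Fin p) ℝ) (π : Fin p → ℝ) :
    (∀ c : Fin k → ℝ, (∀ j, 0 < c j) → ∀ x : Fin p → ℝ, (∀ i, 0 < x i) →
      (∏ i, ((∏ j, c j ^ B j i) * x i) ^ π i) = ∏ i, x i ^ π i)
    ↔ B.mulVec π = 0 :=
  ⟨fun h => (monomial_dimensionless_iff_general B π fun _ => one_pos).1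
      fun c hc => h c hc 1 fun _ => one_pos,
    fun hB c hc _ hx => (monomial_dimensionless_iff_general B π hx).2 hB c hc⟩
end

section
/- Let B be a k×p real matrix and a ∈ ℝ^k a dimension vector. There exists an exponent vector ρ ∈ ℝ^p such that (∏_{j=1}^k c_j^{a_j}) · ∏_{i=1}^p (∏_{j=1}^k c_j^{B_{ji}})^{ρ_i} = 1 for every c ∈ (0,∞)^k, if and only if a lies in the column space of B. (A response with dimension vector a can be made dimensionless by multiplying it by a monomial in the predictors exactly when a ∈ span(B).) -/
/-!
In logarithmic units `c = exp x`, the dimension vector `a` scales by `exp (x ⬝ᵥ a)`. Multiplying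
by the monomial with exponents `ρ` therefore amounts to replacing `a` by `a + B *ᵥ ρ`, and by
nondegeneracy of the dot product only the zero vector is dimensionless.
-/

open Matrix

section

variable {ι κ : Type*} [Fintype ι] [Fintype κ]

/-- The factor by which a quantity with dimension vector `a` scales when the units of the
fundamental dimensions are scaled by `c`. It has this meaning only for positive `c`, elsewhere
`Real.rpow` follows its own conventions. -/
noncomputable def scalingFactor (c a : ι → ℝ) : ℝ :=
  ∏ j, c j ^ a j

/-- A quantity with dimension vector `a` is dimensionless if no change of units rescales it. -/
def IsDimensionless (a : ι → ℝ) : Prop :=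
  ∀ c : ι → ℝ, (∀ j, 0 < c j) → scalingFactor c a = 1

theorem scalingFactor_exp (x a : ι → ℝ) :
    scalingFactor (fun j ↦ Real.exp (x j)) a = Real.exp (x ⬝ᵥ a) := by
  simp only [scalingFactor, dotProduct, Real.exp_sum, Real.exp_mul]

theorem scalingFactor_eq_exp_log_dotProduct {c : ι → ℝ} (hc : ∀ j, 0 < c j) (a : ι → ℝ) :
    scalingFactor c a = Real.exp ((fun j ↦ Real.log (c j)) ⬝ᵥ a) := by
  simp only [← scalingFactor_exp, Real.exp_log (hc _)]

theorem scalingFactor_add {c : ι → ℝ} (hc : ∀ j, 0 < c j) (a b : ι → ℝ) :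
    scalingFactor c (a + b) = scalingFactor c a * scalingFactor c b := by
  simp only [scalingFactor_eq_exp_log_dotProduct hc, dotProduct_add, Real.exp_add]

theorem scalingFactor_mulVec {c : ι → ℝ} (hc : ∀ j, 0 < c j) (B : Matrix ι κ ℝ) (ρ : κ → ℝ) :
    scalingFactor c (B *ᵥ ρ) = ∏ i, scalingFactor c (B.col i) ^ ρ i := by
  set x : ι → ℝ := fun j ↦ Real.log (c j)
  calc scalingFactor c (B *ᵥ ρ)
    _ = Real.exp ((x ᵥ* B) ⬝ᵥ ρ) := by
      rw [scalingFactor_eq_exp_log_dotProduct hc, dotProduct_mulVec]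
    _ = ∏ i, Real.exp (x ⬝ᵥ B.col i) ^ ρ i := (scalingFactor_exp (x ᵥ* B) ρ).symm
    _ = ∏ i, scalingFactor c (B.col i) ^ ρ i := by
      simp only [scalingFactor_eq_exp_log_dotProduct hc, x]

theorem isDimensionless_iff_eq_zero {a : ι → ℝ} : IsDimensionless a ↔ a = 0 := by
  constructor
  · intro ha
    have dotProduct_eq_zero (x : ι → ℝ) : x ⬝ᵥ a = 0 := by
      rw [← Real.exp_eq_one_iff, ← scalingFactor_exp]
      exact ha _ fun j ↦ Real.exp_pos (x j)
    exact dotProduct_self_eq_zero.mp (dotProduct_eq_zero a)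
  · rintro rfl c -
    simp only [scalingFactor, Pi.zero_apply, Real.rpow_zero, Finset.prod_const_one]

theorem isDimensionless_add_mulVec_iff (B : Matrix ι κ ℝ) (a : ι → ℝ) (ρ : κ → ℝ) :
    IsDimensionless (a + B *ᵥ ρ) ↔ ∀ c : ι → ℝ, (∀ j, 0 < c j) →
      scalingFactor c a * ∏ i, scalingFactor c (B.col i) ^ ρ i = 1 :=
  forall₂_congr fun c hc ↦ by rw [scalingFactor_add hc, scalingFactor_mulVec hc]

theorem nondimensionalizable_iff_mem_span_general (B : Matrix ι κ ℝ) (a : ι → ℝ) :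
    (∃ ρ : κ → ℝ, ∀ c : ι → ℝ, (∀ j, 0 < c j) →
      scalingFactor c a * ∏ i, scalingFactor c (B.col i) ^ ρ i = 1)
    ↔ a ∈ LinearMap.range B.mulVecLin := by
  simp only [← isDimensionless_add_mulVec_iff, isDimensionless_iff_eq_zero]
  constructor
  · rintro ⟨ρ, hρ⟩
    exact ⟨-ρ, by rw [mulVecLin_apply, mulVec_neg, eq_neg_of_add_eq_zero_left hρ]⟩
  · rintro ⟨ρ, rfl⟩
    exact ⟨-ρ, by rw [mulVecLin_apply, mulVec_neg, add_neg_cancel]⟩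

end

/-- **Nondimensionalizability of a response.**
A quantity with dimension vector `a` can be made dimensionless by multiplying it by a
monomial in the predictors (with dimension matrix `B`) if and only if `a` lies in the
column space of `B`. -/
theorem nondimensionalizable_iff_mem_span
    (k p : ℕ) (B : Matrix (Fin k) (Fin p) ℝ) (a : Fin k → ℝ) :
    (∃ ρ : Fin p → ℝ, ∀ c : Fin k → ℝ, (∀ j, 0 < c j) →
      (∏ j, c j ^ a j) * ∏ i, (∏ j, c j ^ B j i) ^ ρ i = 1)
    ↔ a ∈ LinearMap.range B.mulVecLin :=
  nondimensionalizable_iff_mem_span_general B a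
end

section
/- Let b ∈ ℝ^p with b_1 ≠ 0, let a ∈ ℝ^r, and let f : (0,∞)^p → ℝ^r satisfy the one-parameter covariance f(e^{b_1 ε} x_1, …, e^{b_p ε} x_p)_l = e^{a_l ε} f(x)_l for every ε ∈ ℝ, every x ∈ (0,∞)^p, and every l = 1, …, r. Then there exists a function F : (0,∞)^{p−1} → ℝ^r such that for every x ∈ (0,∞)^p and every l, f(x)_l = x_1^{a_l / b_1} · F_l( x_2 · x_1^{−b_2/b_1}, …, x_p · x_1^{−b_p/b_1} ). (This is the single-step elimination of one fundamental dimension used inductively in the proof of the Multivariate Buckingham Π-Theorem.) -/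
/-!
Choosing `ε = -log x_1 / b_1` moves `x` along its scaling orbit to the unique point whose first
coordinate is `1`. That point is determined by its other coordinates
`x_i x_1 ^ (-b_i / b_1)`, and covariance recovers `f x` from the value of `f` there.
-/

open Real

section ScalingCovariance

variable {ι : Type*}

/-- The one-parameter group of scalings of a single fundamental dimension by `exp ε`, acting on
quantities `x i` in which this dimension has exponent `b i`. -/
noncomputable def scaleDim (b : ι → ℝ) (ε : ℝ) (x : ι → ℝ) : ι → ℝ :=
  fun i => exp (b i * ε) * x i

/-- The quantities `x` with a fundamental dimension of exponents `b` eliminated by means of the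
reference quantity `x i₀`. The entry at `i₀` itself is kept, so that the result lives in the same
space as `x`. -/
noncomputable def eliminateDim (b : ι → ℝ) (i₀ : ι) (x : ι → ℝ) : ι → ℝ :=
  fun i => x i * x i₀ ^ (-b i / b i₀)

/-- Covariance of a response `f` of exponent `α` under the scalings `scaleDim b`, required at the
points of `s` only; `s` is not assumed to be stable under scaling. -/
def IsScalingCovariantOn {E : Type*} [SMul ℝ E] (b : ι → ℝ) (α : ℝ) (f : (ι → ℝ) → E)
    (s : Set (ι → ℝ)) : Prop :=
  ∀ ε : ℝ, ∀ x ∈ s, f (scaleDim b ε x) = exp (α * ε) • f x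

variable {E : Type*} [MulAction ℝ E] {b : ι → ℝ} {i₀ : ι} {x : ι → ℝ}

lemma scaleDim_neg_log_div (b : ι → ℝ) (hx : 0 < x i₀) :
    scaleDim b (-log (x i₀) / b i₀) x = eliminateDim b i₀ x := by
  funext i
  have exponent_eq : b i * (-log (x i₀) / b i₀) = log (x i₀) * (-b i / b i₀) := by ring
  rw [scaleDim, eliminateDim, exponent_eq, ← rpow_def_of_pos hx, mul_comm]

lemma eliminateDim_self (hb : b i₀ ≠ 0) (hx : 0 < x i₀) : eliminateDim b i₀ x i₀ = 1 := by
  rw [eliminateDim, neg_div, div_self hb, rpow_neg_one, mul_inv_cancel₀ hx.ne']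

lemma extend_eliminateDim (hb : b i₀ ≠ 0) (hx : 0 < x i₀) :
    Function.extend Subtype.val (fun i : {i // i ≠ i₀} => eliminateDim b i₀ x i) 1 =
      eliminateDim b i₀ x := by
  funext i
  by_cases hi : i = i₀
  · subst hi
    rw [Function.extend_apply' _ _ _ (fun ⟨j, hj⟩ => j.2 hj), eliminateDim_self hb hx,
      Pi.one_apply]
  · exact Subtype.val_injective.extend_apply _ _ (⟨i, hi⟩ : {i // i ≠ i₀})

lemma IsScalingCovariantOn.eq_rpow_smul_eliminateDim {α : ℝ} {f : (ι → ℝ) → E}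
    {s : Set (ι → ℝ)} (hf : IsScalingCovariantOn b α f s) (hxs : x ∈ s) (hx : 0 < x i₀) :
    f x = x i₀ ^ (α / b i₀) • f (eliminateDim b i₀ x) := by
  have exponents_cancel : log (x i₀) * (α / b i₀) + α * (-log (x i₀) / b i₀) = 0 := by ring
  rw [← scaleDim_neg_log_div b hx, hf _ x hxs, smul_smul, rpow_def_of_pos hx, ← exp_add,
    exponents_cancel, exp_zero, one_smul]

theorem single_dimension_elimination_general {κ : Type*} (hb : b i₀ ≠ 0) (a : κ → ℝ)
    (f : (ι → ℝ) → κ → E) {s : Set (ι → ℝ)} (hs : ∀ x ∈ s, 0 < x i₀)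
    (hf : ∀ l, IsScalingCovariantOn b (a l) (fun x => f x l) s) :
    ∃ F : ({i // i ≠ i₀} → ℝ) → κ → E, ∀ x ∈ s, ∀ l,
      f x l = x i₀ ^ (a l / b i₀) • F (fun i => x i * x i₀ ^ (-b i / b i₀)) l := by
  refine ⟨fun y => f (Function.extend Subtype.val y 1), fun x hxs l => ?_⟩
  have f_eq := (hf l).eq_rpow_smul_eliminateDim hxs (hs x hxs)
  rw [← extend_eliminateDim hb (hs x hxs)] at f_eq
  exact f_eq

end ScalingCovariance

/-- **Single-step elimination of one fundamental dimension.**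
If `b_1 ≠ 0` (here the first coordinate, indexed by `0 : Fin (p+1)`) and `f` satisfies the
one-parameter covariance `f(e^{b_1 ε} x_1, …, e^{b_p ε} x_p)_l = e^{a_l ε} f(x)_l`, then
there exists `F` with `f(x)_l = x_1^{a_l/b_1} · F_l(x_2 x_1^{-b_2/b_1}, …, x_p x_1^{-b_p/b_1})`. -/
theorem single_dimension_elimination
    (p r : ℕ) (b : Fin (p + 1) → ℝ) (hb : b 0 ≠ 0) (a : Fin r → ℝ)
    (f : (Fin (p + 1) → ℝ) → (Fin r → ℝ))
    (hf : ∀ ε : ℝ, ∀ x : Fin (p + 1) → ℝ, (∀ i, 0 < x i) → ∀ l : Fin r,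
      f (fun i => Real.exp (b i * ε) * x i) l = Real.exp (a l * ε) * f x l) :
    ∃ F : (Fin p → ℝ) → (Fin r → ℝ),
      ∀ x : Fin (p + 1) → ℝ, (∀ i, 0 < x i) → ∀ l : Fin r,
        f x l = x 0 ^ (a l / b 0) *
          F (fun i => x i.succ * x 0 ^ (-(b i.succ) / b 0)) l := by
  obtain ⟨F, hF⟩ := single_dimension_elimination_general (s := {x | ∀ i, 0 < x i}) hb a f
    (fun _ hx => hx 0) fun l ε x hx => hf ε x hx l
  exact ⟨fun y => F fun i => y (i.1.pred i.2), fun x hx l => by simpa using hF x hx l⟩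
end

section
/- Let B be a k×p real matrix, A a k×r real matrix, and suppose there exists a function g : ℝ^p → ℝ^r satisfying g(u + Bᵀ t) = g(u) + Aᵀ t for every u ∈ ℝ^p and t ∈ ℝ^k. Then the column space of A is contained in the column space of B. (The compatibility assumption A ⊆ span(B) of the Multivariate Buckingham Π-Theorem is necessary for a dimensionally covariant relationship to exist.) -/
/-!
If `Bᵀ t = 0`, covariance at any single point `u` reads `g u = g u + Aᵀ t`, so `Aᵀ t = 0`. Hence
`ker Bᵀ ≤ ker Aᵀ`, and the range of a linear map over a field is determined by its annihilator,
the kernel of the transpose.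
-/

open scoped Matrix

theorem ker_le_ker_of_map_add_eq {R M N P : Type*} [Semiring R] [AddCommMonoid M]
    [AddCommMonoid N] [AddCommMonoid P] [IsLeftCancelAdd P] [Module R M] [Module R N] [Module R P]
    {f : M →ₗ[R] N} {h : M →ₗ[R] P} {g : N → P} {u : N}
    (hg : ∀ t, g (u + f t) = g u + h t) : f.ker ≤ h.ker := by
  intro t (ht : f t = 0)
  have fixed : g u = g u + h t := by simpa only [ht, add_zero] using hg t
  exact left_eq_add.mp fixed

theorem range_le_range_iff_ker_dualMap_le {K V₁ V₂ W : Type*} [Field K] [AddCommGroup V₁]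
    [AddCommGroup V₂] [AddCommGroup W] [Module K V₁] [Module K V₂] [Module K W]
    {f : V₁ →ₗ[K] W} {g : V₂ →ₗ[K] W} :
    f.range ≤ g.range ↔ g.dualMap.ker ≤ f.dualMap.ker := by
  rw [LinearMap.ker_dualMap_eq_dualAnnihilator_range,
    LinearMap.ker_dualMap_eq_dualAnnihilator_range,
    Subspace.dualAnnihilator_le_dualAnnihilator_iff]

theorem dualMap_mulVecLin_dotProductEquiv {R m n : Type*} [CommSemiring R] [Fintype m] [Fintype n]
    [DecidableEq m] [DecidableEq n] (A : Matrix m n R) (t : m → R) :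
    A.mulVecLin.dualMap (dotProductEquiv R m t) = dotProductEquiv R n (Aᵀ *ᵥ t) := by
  refine LinearMap.ext fun x ↦ ?_
  change t ⬝ᵥ A *ᵥ x = (Aᵀ *ᵥ t) ⬝ᵥ x
  rw [Matrix.dotProduct_mulVec, Matrix.mulVec_transpose]

theorem dotProductEquiv_mem_ker_dualMap_mulVecLin {R m n : Type*} [CommSemiring R] [Fintype m]
    [Fintype n] [DecidableEq m] {A : Matrix m n R} {t : m → R} :
    dotProductEquiv R m t ∈ A.mulVecLin.dualMap.ker ↔ t ∈ Aᵀ.mulVecLin.ker := by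
  classical
  rw [LinearMap.mem_ker, dualMap_mulVecLin_dotProductEquiv, LinearEquiv.map_eq_zero_iff,
    LinearMap.mem_ker, Matrix.mulVecLin_apply]

theorem range_mulVecLin_le_iff_ker_transpose_le {K m n l : Type*} [Field K] [Fintype m]
    [Fintype n] [Fintype l] {A : Matrix m l K} {B : Matrix m n K} :
    A.mulVecLin.range ≤ B.mulVecLin.range ↔ Bᵀ.mulVecLin.ker ≤ Aᵀ.mulVecLin.ker := by
  classical
  rw [range_le_range_iff_ker_dualMap_le, SetLike.le_def, SetLike.le_def,
    (dotProductEquiv K m).surjective.forall]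
  simp only [dotProductEquiv_mem_ker_dualMap_mulVecLin]

theorem covariance_implies_column_space_le_general {K m n l : Type*} [Field K] [Fintype m]
    [Fintype n] [Fintype l] {B : Matrix m n K} {A : Matrix m l K} {g : (n → K) → (l → K)}
    {u : n → K} (hg : ∀ t, g (u + Bᵀ *ᵥ t) = g u + Aᵀ *ᵥ t) :
    A.mulVecLin.range ≤ B.mulVecLin.range :=
  range_mulVecLin_le_iff_ker_transpose_le.mpr (ker_le_ker_of_map_add_eq hg)

/-- **Necessity of the compatibility assumption `A ⊆ span(B)`.**
If there exists `g : ℝ^p → ℝ^r` satisfying the translation covariance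
`g(u + Bᵀ t) = g(u) + Aᵀ t` for all `u` and `t`, then the column space of `A` is contained
in the column space of `B`. -/
theorem covariance_implies_column_space_le
    (k p r : ℕ) (B : Matrix (Fin k) (Fin p) ℝ) (A : Matrix (Fin k) (Fin r) ℝ)
    (g : (Fin p → ℝ) → (Fin r → ℝ))
    (hg : ∀ u : Fin p → ℝ, ∀ t : Fin k → ℝ,
      g (u + B.transpose.mulVec t) = g u + A.transpose.mulVec t) :
    LinearMap.range A.mulVecLin ≤ LinearMap.range B.mulVecLin :=
  covariance_implies_column_space_le_general (hg 0)
end
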